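/- For τ in the upper half-plane and z ∈ ℂ, ϑ₁₁(2τ, 2z) = (η(2τ)/η(τ)²) · ϑ₁₁(τ, z) · ϑ₁₀(τ, z). -/

import Mathlib

open Real Complex Filter Topology

noncomputable section

noncomputable def theta00 (τ z : ℂ) : ℂ :=
  ∑' n : ℤ, Complex.exp (2*(π:ℂ)*Complex.I*(n:ℂ)*z) *
    Complex.exp (2*(π:ℂ)*Complex.I*τ*((n:ℂ)^2/2))

noncomputable def theta01 (τ z : ℂ) : ℂ :=
  ∑' n : ℤ, (-1:ℂ)^n * Complex.exp (2*(π:ℂ)*Complex.I*(n:ℂ)*z) *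
    Complex.exp (2*(π:ℂ)*Complex.I*τ*((n:ℂ)^2/2))

noncomputable def theta10 (τ z : ℂ) : ℂ :=
  ∑' n : ℤ, Complex.exp (2*(π:ℂ)*Complex.I*((n:ℂ)+1/2)*z) *
    Complex.exp (2*(π:ℂ)*Complex.I*τ*((1/2)*((n:ℂ)+1/2)^2))

noncomputable def theta11 (τ z : ℂ) : ℂ :=
  Complex.I * ∑' n : ℤ, (-1:ℂ)^n * Complex.exp (2*(π:ℂ)*Complex.I*((n:ℂ)+1/2)*z) *
    Complex.exp (2*(π:ℂ)*Complex.I*τ*((1/2)*((n:ℂ)+1/2)^2))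

noncomputable def dedekindEta (τ : ℂ) : ℂ :=
  Complex.exp ((π:ℂ)*Complex.I*τ/12) *
    ∏' n : ℕ, (1 - Complex.exp (2*(π:ℂ)*Complex.I*τ*((n:ℂ)+1)))

/-!
Let `q = e^(πiτ)`. By the Jacobi triple product, `∑ q^(n²) xⁿ = (q²; q²)_∞ P(q, x)` with
`P(q, x) = ∏ (1 + x q²ⁿ⁺¹) (1 + x⁻¹ q²ⁿ⁺¹)`, and difference of squares in every factor gives
`P(q, x) P(q, -x) = P(q², -x²)`. Up to exponential prefactors `ϑ₁₀` and `ϑ₁₁` are theta series with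
opposite values of `x`, so `ϑ₁₁ ϑ₁₀` is `ϑ₁₁(2τ, 2z)` times a quotient of Euler functions, which is
an eta quotient because the fractional powers of `q` cancel.

The triple product is the limit `n → ∞`, by dominated convergence, of the finite identity
`∏_{k < n} (1 + x q²ᵏ⁺¹) (1 + x⁻¹ q²ᵏ⁺¹) = ∑_{|j| ≤ n} [2n, n + j]_{q²} q^(j²) xʲ`,
because the Gaussian binomials are bounded and tend to `1 / (q²; q²)_∞`.
-/

section QBinomial

/-- The Gaussian binomial coefficient `[n, k]_q`, defined by its Pascal recursion so that no
division is involved. -/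
def qBinom {R : Type*} [Semiring R] (q : R) : ℕ → ℕ → R
  | _, 0 => 1
  | 0, _ + 1 => 0
  | n + 1, k + 1 => q ^ (k + 1) * qBinom q n (k + 1) + qBinom q n k

/-- The finite `q`-Pochhammer symbol `(q; q)_n`; the Gaussian binomials are quotients of these. -/
def qPochhammer {R : Type*} [CommRing R] (q : R) (n : ℕ) : R :=
  ∏ k ∈ Finset.range n, (1 - q ^ (k + 1))

section Semiring

variable {R : Type*} [Semiring R] (q : R)

@[simp]
lemma qBinom_zero_right (n : ℕ) : qBinom q n 0 = 1 := by
  cases n <;> rfl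

lemma qBinom_succ_succ (n k : ℕ) :
    qBinom q (n + 1) (k + 1) = q ^ (k + 1) * qBinom q n (k + 1) + qBinom q n k :=
  rfl

lemma qBinom_eq_zero_of_lt {n k : ℕ} (h : n < k) : qBinom q n k = 0 := by
  induction n generalizing k with
  | zero =>
    obtain ⟨k, rfl⟩ := Nat.exists_eq_succ_of_ne_zero h.ne'
    rfl
  | succ n ih =>
    obtain ⟨k, rfl⟩ := Nat.exists_eq_succ_of_ne_zero (Nat.ne_zero_of_lt h)
    rw [qBinom_succ_succ, ih (by lia), ih (by lia), mul_zero, zero_add]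

@[simp]
lemma qBinom_self (n : ℕ) : qBinom q n n = 1 := by
  induction n with
  | zero => rfl
  | succ n ih =>
    rw [qBinom_succ_succ, qBinom_eq_zero_of_lt q n.lt_succ_self, ih, mul_zero, zero_add]

end Semiring

section CommSemiring

variable {R : Type*} [CommSemiring R] (q x : R)

lemma sum_qBinom_succ_mul (n : ℕ) (f : ℕ → R) :
    ∑ k ∈ Finset.range (n + 2), qBinom q (n + 1) k * f k =
      ∑ k ∈ Finset.range (n + 1), qBinom q n k * (q ^ k * f k + f (k + 1)) := by
  have hshift : ∑ k ∈ Finset.range (n + 1), q ^ (k + 1) * qBinom q n (k + 1) * f (k + 1) + f 0 =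
      ∑ k ∈ Finset.range (n + 1), q ^ k * qBinom q n k * f k := by
    have h := Finset.sum_range_succ' (fun k ↦ q ^ k * qBinom q n k * f k) (n + 1)
    rw [Finset.sum_range_succ, qBinom_eq_zero_of_lt q n.lt_succ_self] at h
    simpa using h.symm
  calc ∑ k ∈ Finset.range (n + 2), qBinom q (n + 1) k * f k
      = ∑ k ∈ Finset.range (n + 1), q ^ (k + 1) * qBinom q n (k + 1) * f (k + 1) + f 0 +
          ∑ k ∈ Finset.range (n + 1), qBinom q n k * f (k + 1) := by
        rw [Finset.sum_range_succ', qBinom_zero_right, one_mul, add_right_comm,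
          ← Finset.sum_add_distrib]
        simp only [qBinom_succ_succ, add_mul]
    _ = ∑ k ∈ Finset.range (n + 1), qBinom q n k * (q ^ k * f k + f (k + 1)) := by
        rw [hshift, ← Finset.sum_add_distrib]
        exact Finset.sum_congr rfl fun k _ ↦ by ring

theorem prod_one_add_mul_pow_odd_eq_sum_qBinom (m : ℕ) :
    ∏ k ∈ Finset.range m, (1 + x * q ^ (2 * k + 1)) =
      ∑ k ∈ Finset.range (m + 1), qBinom (q ^ 2) m k * (q ^ k ^ 2 * x ^ k) := by
  induction m generalizing x with
  | zero => simp
  | succ m ih =>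
    have hshift : ∏ k ∈ Finset.range m, (1 + x * q ^ (2 * (k + 1) + 1)) =
        ∏ k ∈ Finset.range m, (1 + x * q ^ 2 * q ^ (2 * k + 1)) :=
      Finset.prod_congr rfl fun k _ ↦ by ring
    rw [Finset.prod_range_succ', hshift, ih, sum_qBinom_succ_mul, Finset.sum_mul]
    exact Finset.sum_congr rfl fun k _ ↦ by ring

theorem prod_one_add_mul_prod_add_eq_sum_qBinom (m n : ℕ) :
    (∏ k ∈ Finset.range m, (1 + x * q ^ (2 * k + 1))) *
        ∏ k ∈ Finset.range n, (x + q ^ (2 * k + 1)) =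
      ∑ k ∈ Finset.range (m + n + 1),
        qBinom (q ^ 2) (m + n) k * (q ^ ((k - n : ℤ).natAbs ^ 2) * x ^ k) := by
  induction n with
  | zero => simpa using prod_one_add_mul_pow_odd_eq_sum_qBinom q x m
  | succ n ih =>
    rw [Finset.prod_range_succ, ← mul_assoc, ih, ← add_assoc, sum_qBinom_succ_mul, Finset.sum_mul]
    refine Finset.sum_congr rfl fun k _ ↦ ?_
    have hexp : (k - n : ℤ).natAbs ^ 2 + (2 * n + 1) =
        2 * k + (k - (n + 1 : ℕ) : ℤ).natAbs ^ 2 := by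
      zify
      simp only [sq_abs]
      ring
    have hpow : q ^ ((k - n : ℤ).natAbs ^ 2) * q ^ (2 * n + 1) =
        (q ^ 2) ^ k * q ^ ((k - (n + 1 : ℕ) : ℤ).natAbs ^ 2) := by
      rw [← pow_add, hexp, pow_add, pow_mul]
    have hsub : ((k + 1 : ℕ) - (n + 1 : ℕ) : ℤ) = k - n := by lia
    rw [hsub, mul_assoc, ← mul_assoc ((q ^ 2) ^ k), ← hpow]
    ring

end CommSemiring

lemma qPochhammer_succ {R : Type*} [CommRing R] (q : R) (n : ℕ) :
    qPochhammer q (n + 1) = qPochhammer q n * (1 - q ^ (n + 1)) :=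
  Finset.prod_range_succ _ n

theorem qBinom_mul_qPochhammer_mul_qPochhammer {R : Type*} [CommRing R] (q : R) (i j : ℕ) :
    qBinom q (i + j) i * (qPochhammer q i * qPochhammer q j) = qPochhammer q (i + j) := by
  induction i generalizing j with
  | zero => simp [qPochhammer]
  | succ i ihi =>
    induction j with
    | zero => simp [qPochhammer]
    | succ j ihj =>
      have hi := ihi (j + 1)
      rw [← add_assoc, qPochhammer_succ q j] at hi
      rw [add_right_comm, qPochhammer_succ q i] at ihj
      rw [← add_assoc, add_right_comm i, qBinom_succ_succ, qPochhammer_succ q i,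
        qPochhammer_succ q j, qPochhammer_succ q (i + j + 1)]
      linear_combination q ^ (i + 1) * (1 - q ^ (j + 1)) * ihj + (1 - q ^ (i + 1)) * hi

theorem prod_one_add_mul_one_add_inv_eq_sum_qBinom {K : Type*} [Field K] (q : K) {x : K}
    (hx : x ≠ 0) (n : ℕ) :
    ∏ k ∈ Finset.range n, (1 + x * q ^ (2 * k + 1)) * (1 + x⁻¹ * q ^ (2 * k + 1)) =
      ∑ j ∈ Finset.Icc (-n : ℤ) n,
        qBinom (q ^ 2) (n + n) (n + j).toNat * (q ^ (j.natAbs ^ 2) * x ^ j) := by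
  have hfactor : ∏ k ∈ Finset.range n, (x + q ^ (2 * k + 1)) =
      x ^ n * ∏ k ∈ Finset.range n, (1 + x⁻¹ * q ^ (2 * k + 1)) := by
    nth_rw 2 [← Finset.card_range n]
    rw [Finset.pow_card_mul_prod]
    exact Finset.prod_congr rfl fun k _ ↦ by rw [mul_add, mul_one, mul_inv_cancel_left₀ hx]
  refine mul_left_cancel₀ (pow_ne_zero n hx) ?_
  rw [Finset.prod_mul_distrib, mul_left_comm, ← hfactor, prod_one_add_mul_prod_add_eq_sum_qBinom,
    Finset.mul_sum]
  refine Finset.sum_nbij' (fun k ↦ (k - n : ℤ)) (fun j ↦ (n + j).toNat) ?_ ?_ ?_ ?_ fun k _ ↦ ?_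
  · simp only [Finset.mem_range, Finset.mem_Icc]
    lia
  · simp only [Finset.mem_range, Finset.mem_Icc]
    lia
  · simp
  · simp only [Finset.mem_Icc]
    lia
  · rw [zpow_sub₀ hx, zpow_natCast, zpow_natCast, add_sub_cancel, Int.toNat_natCast]
    field_simp

end QBinomial

section TripleProduct

variable {K : Type*} [NormedField K]

/-- Euler's function `φ(q) = (q; q)_∞`, the infinite product in the Dedekind eta function. -/
def eulerFunction (q : K) : K :=
  ∏' n : ℕ, (1 - q ^ (n + 1))

/-- The product `(-xq; q²)_∞ (-x⁻¹q; q²)_∞` of the two factors of the Jacobi triple product that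
depend on `x`. -/
def jacobiProduct (q x : K) : K :=
  ∏' n : ℕ, (1 + x * q ^ (2 * n + 1)) * (1 + x⁻¹ * q ^ (2 * n + 1))

lemma norm_pow_lt_one {q : K} (hq : ‖q‖ < 1) {n : ℕ} (hn : n ≠ 0) : ‖q ^ n‖ < 1 := by
  rw [norm_pow]
  exact pow_lt_one₀ (norm_nonneg q) hq hn

lemma one_sub_pow_succ_ne_zero {q : K} (hq : ‖q‖ < 1) (n : ℕ) : 1 - q ^ (n + 1) ≠ 0 := by
  intro h
  refine (norm_pow_lt_one hq n.succ_ne_zero).ne ?_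
  rw [← sub_eq_zero.mp h, norm_one]

lemma qPochhammer_ne_zero {q : K} (hq : ‖q‖ < 1) (n : ℕ) : qPochhammer q n ≠ 0 :=
  Finset.prod_ne_zero_iff.mpr fun k _ ↦ one_sub_pow_succ_ne_zero hq k

lemma qBinom_add_eq_div {q : K} (hq : ‖q‖ < 1) (i j : ℕ) :
    qBinom q (i + j) i = qPochhammer q (i + j) / (qPochhammer q i * qPochhammer q j) :=
  eq_div_of_mul_eq (mul_ne_zero (qPochhammer_ne_zero hq i) (qPochhammer_ne_zero hq j))
    (qBinom_mul_qPochhammer_mul_qPochhammer q i j)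

lemma summable_pow_sq_mul_pow {q : K} (hq : ‖q‖ < 1) (x : K) :
    Summable fun n : ℕ ↦ ‖q ^ n ^ 2 * x ^ n‖ := by
  have hratio : Tendsto (fun n : ℕ ↦ ‖q ^ (2 * n + 1) * x‖) atTop (𝓝 0) := by
    have hexp : Tendsto (fun n : ℕ ↦ 2 * n + 1) atTop atTop :=
      tendsto_atTop_mono (fun n ↦ show n ≤ 2 * n + 1 by lia) tendsto_id
    simpa using (((tendsto_pow_atTop_nhds_zero_of_norm_lt_one hq).comp hexp).mul_const x).norm
  refine summable_of_ratio_norm_eventually_le (r := 1 / 2) (by norm_num) ?_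
  filter_upwards [hratio.eventually_le_const (by norm_num : (0 : ℝ) < 1 / 2)] with n hn
  rw [norm_norm, norm_norm]
  calc ‖q ^ (n + 1) ^ 2 * x ^ (n + 1)‖ = ‖q ^ (2 * n + 1) * x‖ * ‖q ^ n ^ 2 * x ^ n‖ := by
        rw [← norm_mul]
        ring_nf
    _ ≤ 1 / 2 * ‖q ^ n ^ 2 * x ^ n‖ := by gcongr

lemma summable_pow_natAbs_sq_mul_zpow {q : K} (hq : ‖q‖ < 1) (x : K) :
    Summable fun n : ℤ ↦ ‖q ^ (n.natAbs ^ 2) * x ^ n‖ := by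
  refine .of_nat_of_neg ?_ ?_
  · simpa using summable_pow_sq_mul_pow hq x
  · simpa using summable_pow_sq_mul_pow hq x⁻¹

variable [CompleteSpace K] {q : K}

lemma eulerFunction_ne_zero (hq : ‖q‖ < 1) : eulerFunction q ≠ 0 := by
  simp_rw [eulerFunction, sub_eq_add_neg]
  refine tprod_one_add_ne_zero_of_summable (fun n ↦ ?_) ?_
  · simpa only [← sub_eq_add_neg] using one_sub_pow_succ_ne_zero hq n
  · simpa using (summable_nat_add_iff 1).mpr (summable_geometric_of_lt_one (norm_nonneg _) hq)

lemma tendsto_qPochhammer (hq : ‖q‖ < 1) :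
    Tendsto (qPochhammer q) atTop (𝓝 (eulerFunction q)) := by
  have hmul : Multipliable fun n : ℕ ↦ 1 + -q ^ (n + 1) := multipliable_one_add_of_summable <| by
    simpa using (summable_nat_add_iff 1).mpr (summable_geometric_of_lt_one (norm_nonneg _) hq)
  simp_rw [← sub_eq_add_neg] at hmul
  exact hmul.hasProd.tendsto_prod_nat

lemma tendsto_qBinom_add (hq : ‖q‖ < 1) :
    Tendsto (fun p : ℕ × ℕ ↦ qBinom q (p.1 + p.2) p.1) (atTop ×ˢ atTop)
      (𝓝 (eulerFunction q)⁻¹) := by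
  have hφ := eulerFunction_ne_zero hq
  have hlim := tendsto_qPochhammer hq
  have hdiv := (hlim.comp (tendsto_fst.atTop_add_atTop tendsto_snd)).div
    ((hlim.comp tendsto_fst).mul (hlim.comp tendsto_snd)) (mul_ne_zero hφ hφ)
  rw [div_mul_cancel_left₀ hφ] at hdiv
  exact hdiv.congr fun p ↦ (qBinom_add_eq_div hq p.1 p.2).symm

lemma exists_norm_qBinom_le (hq : ‖q‖ < 1) : ∃ C, ∀ n k, ‖qBinom q n k‖ ≤ C := by
  have hlim := tendsto_qPochhammer hq
  obtain ⟨A, hA⟩ := hlim.norm.bddAbove_range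
  obtain ⟨B, hB⟩ := (hlim.inv₀ (eulerFunction_ne_zero hq)).norm.bddAbove_range
  replace hA n : ‖qPochhammer q n‖ ≤ A := hA ⟨n, rfl⟩
  replace hB n : ‖(qPochhammer q n)⁻¹‖ ≤ B := hB ⟨n, rfl⟩
  have hA0 : 0 ≤ A := (norm_nonneg _).trans (hA 0)
  have hB0 : 0 ≤ B := (norm_nonneg _).trans (hB 0)
  refine ⟨A * (B * B), fun n k ↦ ?_⟩
  rcases lt_or_ge n k with hnk | hkn
  · rw [qBinom_eq_zero_of_lt q hnk, norm_zero]
    positivity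
  · obtain ⟨j, rfl⟩ := Nat.exists_eq_add_of_le hkn
    rw [qBinom_add_eq_div hq, div_eq_mul_inv, mul_inv, norm_mul, norm_mul]
    gcongr
    exacts [hA _, hB _, hB _]

lemma multipliable_one_add_mul_pow_odd (hq : ‖q‖ < 1) (x : K) :
    Multipliable fun n : ℕ ↦ 1 + x * q ^ (2 * n + 1) := by
  refine multipliable_one_add_of_summable ?_
  have hgeom := (summable_geometric_of_lt_one (norm_nonneg q) hq).comp_injective
    (i := fun n : ℕ ↦ 2 * n + 1) fun m n h ↦ by simpa using h
  simpa using hgeom.mul_left ‖x‖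

lemma multipliable_jacobiProduct (hq : ‖q‖ < 1) (x : K) :
    Multipliable fun n : ℕ ↦ (1 + x * q ^ (2 * n + 1)) * (1 + x⁻¹ * q ^ (2 * n + 1)) :=
  (multipliable_one_add_mul_pow_odd hq x).mul (multipliable_one_add_mul_pow_odd hq x⁻¹)

lemma tendsto_qBinom_central_shift (hq : ‖q‖ < 1) (j : ℤ) :
    Tendsto (fun n : ℕ ↦ qBinom q (n + n) (n + j).toNat) atTop (𝓝 (eulerFunction q)⁻¹) := by
  have hshift (i : ℤ) : Tendsto (fun n : ℕ ↦ (n + i).toNat) atTop atTop :=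
    tendsto_atTop_mono (fun n ↦ by lia) (tendsto_sub_atTop_nat i.natAbs)
  refine ((tendsto_qBinom_add hq).comp ((hshift j).prodMk (hshift (-j)))).congr' ?_
  filter_upwards [eventually_ge_atTop j.natAbs] with n hn
  rw [Function.comp_apply]
  congr 1
  lia

theorem jacobi_triple_product (hq : ‖q‖ < 1) {x : K} (hx : x ≠ 0) :
    ∑' n : ℤ, q ^ (n.natAbs ^ 2) * x ^ n = eulerFunction (q ^ 2) * jacobiProduct q x := by
  have hq2 := norm_pow_lt_one hq two_ne_zero
  obtain ⟨C, hC⟩ := exists_norm_qBinom_le hq2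
  let F (n : ℕ) : ℤ → K := (Finset.Icc (-n : ℤ) n : Set ℤ).indicator fun j ↦
    qBinom (q ^ 2) (n + n) (n + j).toNat * (q ^ (j.natAbs ^ 2) * x ^ j)
  have hpartial (n : ℕ) : ∑' j, F n j =
      ∏ k ∈ Finset.range n, (1 + x * q ^ (2 * k + 1)) * (1 + x⁻¹ * q ^ (2 * k + 1)) := by
    rw [prod_one_add_mul_one_add_inv_eq_sum_qBinom q hx, sum_eq_tsum_indicator]
  have hterm (j : ℤ) : Tendsto (F · j) atTop
      (𝓝 ((eulerFunction (q ^ 2))⁻¹ * (q ^ (j.natAbs ^ 2) * x ^ j))) := by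
    refine ((tendsto_qBinom_central_shift hq2 j).mul_const _).congr' ?_
    filter_upwards [eventually_ge_atTop j.natAbs] with n hn
    have hj : j ∈ (Finset.Icc (-n : ℤ) n : Set ℤ) := by
      rw [Finset.coe_Icc, Set.mem_Icc]
      lia
    simp only [F, Set.indicator_of_mem hj]
  have hbound (n : ℕ) (j : ℤ) : ‖F n j‖ ≤ C * ‖q ^ (j.natAbs ^ 2) * x ^ j‖ := by
    refine (norm_indicator_le_norm_self _ _).trans ?_
    rw [norm_mul]
    gcongr
    exact hC _ _
  have hsum := tendsto_tsum_of_dominated_convergence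
    ((summable_pow_natAbs_sq_mul_zpow hq x).mul_left C) hterm (.of_forall hbound)
  simp_rw [hpartial] at hsum
  have hprod := (multipliable_jacobiProduct hq x).hasProd.tendsto_prod_nat
  rw [jacobiProduct, tendsto_nhds_unique hprod hsum, tsum_mul_left,
    mul_inv_cancel_left₀ (eulerFunction_ne_zero hq2)]

lemma jacobiProduct_mul_jacobiProduct_neg (hq : ‖q‖ < 1) (x : K) :
    jacobiProduct q x * jacobiProduct q (-x) = jacobiProduct (q ^ 2) (-x ^ 2) := by
  rw [jacobiProduct, jacobiProduct, jacobiProduct,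
    ← (multipliable_jacobiProduct hq x).tprod_mul (multipliable_jacobiProduct hq (-x))]
  refine tprod_congr fun n ↦ ?_
  rw [inv_neg, inv_neg, ← inv_pow]
  ring

end TripleProduct

section Theta

variable {τ : ℂ}

lemma norm_exp_pi_mul_I_mul_lt_one (hτ : 0 < τ.im) : ‖Complex.exp (π * Complex.I * τ)‖ < 1 := by
  rw [Complex.norm_exp, Real.exp_lt_one_iff]
  simpa using mul_pos Real.pi_pos hτ

lemma cexp_two_mul (w : ℂ) : Complex.exp (2 * w) = Complex.exp w ^ 2 := by
  rw [← Complex.exp_nat_mul, Nat.cast_ofNat]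

theorem jacobiTheta₂_eq_eulerFunction_mul_jacobiProduct (hτ : 0 < τ.im) (z : ℂ) :
    jacobiTheta₂ z τ = eulerFunction (Complex.exp (π * Complex.I * τ) ^ 2) *
      jacobiProduct (Complex.exp (π * Complex.I * τ)) (Complex.exp (2 * π * Complex.I * z)) := by
  rw [← jacobi_triple_product (norm_exp_pi_mul_I_mul_lt_one hτ) (Complex.exp_ne_zero _)]
  refine tsum_congr fun n ↦ ?_
  have hsq : ((n.natAbs ^ 2 : ℕ) : ℂ) = n ^ 2 := by
    rw [← Int.cast_natCast, Nat.cast_pow, Int.natAbs_sq, Int.cast_pow]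
  rw [jacobiTheta₂_term, ← Complex.exp_nat_mul, hsq, ← Complex.exp_int_mul, ← Complex.exp_add]
  ring_nf

lemma dedekindEta_eq_exp_mul_eulerFunction (τ : ℂ) :
    dedekindEta τ = Complex.exp (π * Complex.I * τ / 12) *
      eulerFunction (Complex.exp (π * Complex.I * τ) ^ 2) := by
  rw [dedekindEta, eulerFunction]
  congr 1
  refine tprod_congr fun n ↦ ?_
  rw [← cexp_two_mul, ← Complex.exp_nat_mul]
  push_cast
  ring_nf

lemma dedekindEta_ne_zero (hτ : 0 < τ.im) : dedekindEta τ ≠ 0 := by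
  rw [dedekindEta_eq_exp_mul_eulerFunction]
  exact mul_ne_zero (Complex.exp_ne_zero _)
    (eulerFunction_ne_zero (norm_pow_lt_one (norm_exp_pi_mul_I_mul_lt_one hτ) two_ne_zero))

theorem dedekindEta_mul_jacobiTheta₂_mul_jacobiTheta₂_add_half (hτ : 0 < τ.im) (z : ℂ) :
    dedekindEta (2 * τ) * (jacobiTheta₂ z τ * jacobiTheta₂ (z + 1 / 2) τ) =
      dedekindEta τ ^ 2 * jacobiTheta₂ (2 * z + 1 / 2) (2 * τ) := by
  have hτ2 : 0 < (2 * τ).im := by simpa using hτ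
  have hhalf (w : ℂ) : Complex.exp (2 * π * Complex.I * (w + 1 / 2)) =
      -Complex.exp (2 * π * Complex.I * w) := by
    rw [← Complex.exp_add_pi_mul_I]
    ring_nf
  have hdouble : Complex.exp (2 * π * Complex.I * (2 * z)) =
      Complex.exp (2 * π * Complex.I * z) ^ 2 := by
    rw [mul_left_comm, cexp_two_mul]
  have hη : Complex.exp (π * Complex.I * (2 * τ) / 12) =
      Complex.exp (π * Complex.I * τ / 12) ^ 2 := by
    rw [mul_left_comm, mul_div_assoc, cexp_two_mul]
  have hq : Complex.exp (π * Complex.I * (2 * τ)) = Complex.exp (π * Complex.I * τ) ^ 2 := by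
    rw [mul_left_comm, cexp_two_mul]
  rw [jacobiTheta₂_eq_eulerFunction_mul_jacobiProduct hτ,
    jacobiTheta₂_eq_eulerFunction_mul_jacobiProduct hτ,
    jacobiTheta₂_eq_eulerFunction_mul_jacobiProduct hτ2, dedekindEta_eq_exp_mul_eulerFunction,
    dedekindEta_eq_exp_mul_eulerFunction, hη, hhalf, hhalf, hdouble, hq,
    ← jacobiProduct_mul_jacobiProduct_neg (norm_exp_pi_mul_I_mul_lt_one hτ)]
  ring

lemma theta10_eq_exp_mul_jacobiTheta₂ (τ z : ℂ) :
    theta10 τ z = Complex.exp (π * Complex.I * (z + τ / 4)) * jacobiTheta₂ (z + τ / 2) τ := by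
  rw [theta10, jacobiTheta₂, ← tsum_mul_left]
  refine tsum_congr fun n ↦ ?_
  rw [jacobiTheta₂_term, ← Complex.exp_add, ← Complex.exp_add]
  ring_nf

lemma theta11_eq_I_mul_exp_mul_jacobiTheta₂ (τ z : ℂ) :
    theta11 τ z = Complex.I * (Complex.exp (π * Complex.I * (z + τ / 4)) *
      jacobiTheta₂ (z + τ / 2 + 1 / 2) τ) := by
  rw [theta11]
  congr 1
  rw [jacobiTheta₂, ← tsum_mul_left]
  refine tsum_congr fun n ↦ ?_
  have hsign : (-1 : ℂ) ^ n = Complex.exp (n * (π * Complex.I)) := by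
    rw [Complex.exp_int_mul, Complex.exp_pi_mul_I]
  rw [jacobiTheta₂_term, hsign, ← Complex.exp_add, ← Complex.exp_add, ← Complex.exp_add]
  ring_nf

end Theta

theorem stmt9 (τ z : ℂ) (hτ : 0 < τ.im) :
    theta11 (2*τ) (2*z) = (dedekindEta (2*τ) / (dedekindEta τ)^2) * (theta11 τ z * theta10 τ z) := by
  have hη : dedekindEta τ ≠ 0 := dedekindEta_ne_zero hτ
  have hθ := dedekindEta_mul_jacobiTheta₂_mul_jacobiTheta₂_add_half hτ (z + τ / 2)
  have hexp : Complex.exp (π * Complex.I * (2 * z + 2 * τ / 4)) =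
      Complex.exp (π * Complex.I * (z + τ / 4)) ^ 2 := by
    rw [← cexp_two_mul]
    ring_nf
  have hz : 2 * (z + τ / 2) + 1 / 2 = 2 * z + 2 * τ / 2 + 1 / 2 := by ring
  rw [hz] at hθ
  rw [theta11_eq_I_mul_exp_mul_jacobiTheta₂, theta11_eq_I_mul_exp_mul_jacobiTheta₂,
    theta10_eq_exp_mul_jacobiTheta₂, hexp, div_mul_eq_mul_div, eq_div_iff (pow_ne_zero 2 hη)]
  linear_combination -Complex.I * Complex.exp (π * Complex.I * (z + τ / 4)) ^ 2 * hθ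

end
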